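/- Suppose each A_k has full row rank with λ_min(A_k A_k^T) ≥ γ_k² for constants γ_k > 0, and let γ_min := min_k γ_k. Then for every r ≥ 0 the cyclic exact BCD iterates satisfy f(x^{(r+1)}) − f* ≤ R_0 · (1/γ_min) · log(2NK) · (L + L_max) · √(Σ_{k=1}^K ‖A_k(x_k^{(r+1)} − x_k^{(r)})‖²). -/

import Mathlib

open Finset

/-- Squared Euclidean norm of a vector in `ℝ^n`. -/
noncomputable def sqnorm {n : ℕ} (v : Fin n → ℝ) : ℝ := ∑ i, v i ^ 2

/-- Euclidean inner product on `ℝ^n`. -/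
noncomputable def dotp {n : ℕ} (u v : Fin n → ℝ) : ℝ := ∑ i, u i * v i

/-- `λ_max(AᵀA)` for a real matrix `A`, characterized as the maximum of `‖Av‖²`
over unit vectors `v`. -/
noncomputable def lamMaxQ {M N : ℕ} (A : Matrix (Fin M) (Fin N) ℝ) : ℝ :=
  sSup {r : ℝ | ∃ v : Fin N → ℝ, sqnorm v = 1 ∧ r = sqnorm (A.mulVec v)}

/-- `λ_min(AᵀA)` for a real matrix `A`, characterized as the minimum of `‖Av‖²`
over unit vectors `v`. -/
noncomputable def lamMinQ {M N : ℕ} (A : Matrix (Fin M) (Fin N) ℝ) : ℝ :=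
  sInf {r : ℝ | ∃ v : Fin N → ℝ, sqnorm v = 1 ∧ r = sqnorm (A.mulVec v)}

/-- `λ_max(AᵀA)` for the concatenated matrix `A = [A_1 ⋯ A_K]`, acting on block
vectors. -/
noncomputable def lamMaxBlock {K M N : ℕ} (A : Fin K → Matrix (Fin M) (Fin N) ℝ) : ℝ :=
  sSup {r : ℝ | ∃ v : Fin K → Fin N → ℝ, (∑ k, sqnorm (v k)) = 1 ∧
    r = sqnorm (∑ k, (A k).mulVec (v k))}

/-- Maximum of a finite family of reals indexed by `Fin K`, `K ≥ 1`. -/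
noncomputable def maxOf {K : ℕ} (hK : 1 ≤ K) (P : Fin K → ℝ) : ℝ :=
  Finset.univ.sup' (Finset.univ_nonempty_iff.mpr ⟨⟨0, hK⟩⟩) P

/-- Minimum of a finite family of reals indexed by `Fin K`, `K ≥ 1`. -/
noncomputable def minOf {K : ℕ} (hK : 1 ≤ K) (P : Fin K → ℝ) : ℝ :=
  Finset.univ.inf' (Finset.univ_nonempty_iff.mpr ⟨⟨0, hK⟩⟩) P

/-- The residual `Σ_k A_k x_k − b`. -/
noncomputable def resid {K M N : ℕ} (A : Fin K → Matrix (Fin M) (Fin N) ℝ)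
    (b : Fin M → ℝ) (x : Fin K → Fin N → ℝ) : Fin M → ℝ :=
  (∑ k, (A k).mulVec (x k)) - b

/-- The smooth part `g(x) = (1/2)‖Σ_k A_k x_k − b‖²`. -/
noncomputable def gq {K M N : ℕ} (A : Fin K → Matrix (Fin M) (Fin N) ℝ)
    (b : Fin M → ℝ) (x : Fin K → Fin N → ℝ) : ℝ :=
  (1 / 2) * sqnorm (resid A b x)

/-- The objective `f(x) = g(x) + Σ_k h_k(x_k)`. -/
noncomputable def fq {K M N : ℕ} (A : Fin K → Matrix (Fin M) (Fin N) ℝ)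
    (b : Fin M → ℝ) (h : Fin K → (Fin N → ℝ) → ℝ) (x : Fin K → Fin N → ℝ) : ℝ :=
  gq A b x + ∑ k, h k (x k)

/-- The partial gradient `∇_k g(x) = A_kᵀ (Σ_j A_j x_j − b)`. -/
noncomputable def gradk {K M N : ℕ} (A : Fin K → Matrix (Fin M) (Fin N) ℝ)
    (b : Fin M → ℝ) (x : Fin K → Fin N → ℝ) (k : Fin K) : Fin N → ℝ :=
  ((A k).transpose).mulVec (resid A b x)

/-- The intermediate point `w_k^{(r+1)}` of the cycle: blocks `j < k` come from
`x^{(r+1)} = xp`, the remaining blocks from `x^{(r)} = x`. -/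
def wpt {K N : ℕ} (x xp : Fin K → Fin N → ℝ) (k : Fin K) : Fin K → Fin N → ℝ :=
  fun j => if j < k then xp j else x j

/-- The objective of the `k`-th BCPG prox subproblem at the point
`w_k^{(r+1)} = wpt x xp k`, evaluated at candidate block `y`. -/
noncomputable def bcpgObj {K M N : ℕ} (A : Fin K → Matrix (Fin M) (Fin N) ℝ)
    (b : Fin M → ℝ) (h : Fin K → (Fin N → ℝ) → ℝ) (P : Fin K → ℝ)
    (x xp : Fin K → Fin N → ℝ) (k : Fin K) (y : Fin N → ℝ) : ℝ :=
  dotp (gradk A b (wpt x xp k) k) (y - x k) + (P k / 2) * sqnorm (y - x k) + h k y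

/-- One cycle of cyclic BCPG: `xp = x^{(r+1)}` is obtained from `x = x^{(r)}`
by letting, for `k = 1,…,K`, the `k`-th block minimize the prox subproblem at
`w_k^{(r+1)}` over `X_k`. -/
def BCPGStep {K M N : ℕ} (A : Fin K → Matrix (Fin M) (Fin N) ℝ)
    (b : Fin M → ℝ) (h : Fin K → (Fin N → ℝ) → ℝ)
    (X : Fin K → Set (Fin N → ℝ)) (P : Fin K → ℝ)
    (x xp : Fin K → Fin N → ℝ) : Prop :=
  ∀ k : Fin K, xp k ∈ X k ∧ ∀ y ∈ X k,
    bcpgObj A b h P x xp k (xp k) ≤ bcpgObj A b h P x xp k y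

/-- One cycle of cyclic exact BCD: `xp = x^{(r+1)}` is obtained from
`x = x^{(r)}` by letting, for `k = 1,…,K`, the `k`-th block minimize
`f(x_1^{(r+1)},…,x_{k−1}^{(r+1)}, ·, x_{k+1}^{(r)},…,x_K^{(r)})` over `X_k`. -/
def BCDStep {K M N : ℕ} (A : Fin K → Matrix (Fin M) (Fin N) ℝ)
    (b : Fin M → ℝ) (h : Fin K → (Fin N → ℝ) → ℝ)
    (X : Fin K → Set (Fin N → ℝ))
    (x xp : Fin K → Fin N → ℝ) : Prop :=
  ∀ k : Fin K, xp k ∈ X k ∧ ∀ y ∈ X k,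
    fq A b h (Function.update (wpt x xp k) k (xp k)) ≤
      fq A b h (Function.update (wpt x xp k) k y)

/-! Comparing the gradient of `g` at the end of a cycle with the gradients seen by the block
minimizations, the cost-to-go `f(x⁺) - f(y)` is at most `∑_j ⟨d_j, ∑_{k < j} A_k (x⁺_k - y_k)⟩`,
where `d_j = A_j (x⁺_j - x_j)`. Each partial sum of the `A_k (x⁺_k - y_k)` is the image of a
truncated block vector, hence has squared norm at most `L ‖x⁺ - y‖²`, so Cauchy–Schwarz bounds the
cost-to-go by `√(K L) ‖d‖ ‖x⁺ - y‖`. Full row rank absorbs the factor `√K`: testing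
`A Aᵀ = ∑_k A_k A_kᵀ` on a unit vector gives `K γ_min² ≤ L`, that is `√(K L) ≤ L / γ_min`. As
`log(2NK) ≥ 1`, this is sharper than the logarithmic bound.
-/

section

open Matrix Function

section SqNorm

variable {n : ℕ}

lemma sqnorm_eq_dotProduct (v : Fin n → ℝ) : sqnorm v = v ⬝ᵥ v := by
  simp only [sqnorm, dotProduct, sq]

lemma sqnorm_nonneg (v : Fin n → ℝ) : 0 ≤ sqnorm v :=
  sum_nonneg fun _ _ => sq_nonneg _

@[simp]
lemma sqnorm_zero : sqnorm (0 : Fin n → ℝ) = 0 := by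
  simp [sqnorm]

lemma sqnorm_smul (c : ℝ) (v : Fin n → ℝ) : sqnorm (c • v) = c ^ 2 * sqnorm v := by
  simp only [sqnorm, Pi.smul_apply, smul_eq_mul, mul_pow, mul_sum]

lemma sqnorm_add (u v : Fin n → ℝ) :
    sqnorm (u + v) = sqnorm u + 2 * (u ⬝ᵥ v) + sqnorm v := by
  simp only [sqnorm_eq_dotProduct, add_dotProduct, dotProduct_add, dotProduct_comm v u]
  ring

lemma dotProduct_sq_le_sqnorm_mul_sqnorm (u v : Fin n → ℝ) :
    (u ⬝ᵥ v) ^ 2 ≤ sqnorm u * sqnorm v :=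
  sum_mul_sq_le_sq_mul_sq _ _ _

variable {ι : Type*} [Fintype ι]

lemma sum_sqnorm_nonneg (v : ι → Fin n → ℝ) : 0 ≤ ∑ i, sqnorm (v i) :=
  sum_nonneg fun _ _ => sqnorm_nonneg _

lemma sum_dotProduct_sq_le (u v : ι → Fin n → ℝ) :
    (∑ i, u i ⬝ᵥ v i) ^ 2 ≤ (∑ i, sqnorm (u i)) * ∑ i, sqnorm (v i) := by
  simp only [dotProduct, sqnorm, ← Fintype.sum_prod_type']
  exact sum_mul_sq_le_sq_mul_sq _ _ _

end SqNorm

section ExtremalEigenvalues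

variable {K M N : ℕ}

lemma lamMaxQ_nonneg (B : Matrix (Fin M) (Fin N) ℝ) : 0 ≤ lamMaxQ B := by
  apply Real.sSup_nonneg
  rintro _ ⟨v, -, rfl⟩
  exact sqnorm_nonneg _

lemma lamMinQ_le_sqnorm_mulVec (B : Matrix (Fin M) (Fin N) ℝ) {v : Fin N → ℝ}
    (hv : sqnorm v = 1) : lamMinQ B ≤ sqnorm (B *ᵥ v) := by
  refine csInf_le ⟨0, ?_⟩ ⟨v, hv, rfl⟩
  rintro _ ⟨w, -, rfl⟩
  exact sqnorm_nonneg _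

variable (A : Fin K → Matrix (Fin M) (Fin N) ℝ)

lemma lamMaxBlock_nonneg : 0 ≤ lamMaxBlock A := by
  apply Real.sSup_nonneg
  rintro _ ⟨v, -, rfl⟩
  exact sqnorm_nonneg _

lemma sqnorm_sum_mulVec_le_frobenius (v : Fin K → Fin N → ℝ) :
    sqnorm (∑ k, A k *ᵥ v k) ≤ (∑ i, ∑ k, sqnorm (A k i)) * ∑ k, sqnorm (v k) := by
  rw [sqnorm, sum_mul]
  refine sum_le_sum fun i _ => ?_
  rw [Finset.sum_apply]
  exact sum_dotProduct_sq_le (fun k => A k i) v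

lemma sqnorm_sum_mulVec_le_lamMaxBlock (v : Fin K → Fin N → ℝ) :
    sqnorm (∑ k, A k *ᵥ v k) ≤ lamMaxBlock A * ∑ k, sqnorm (v k) := by
  rcases (sum_sqnorm_nonneg v).eq_or_lt with hv | hv
  · simpa [← hv] using sqnorm_sum_mulVec_le_frobenius A v
  set s := ∑ k, sqnorm (v k) with hs
  have hc : (√s)⁻¹ ^ 2 = s⁻¹ := by rw [inv_pow, Real.sq_sqrt hv.le]
  have hunit : ∑ k, sqnorm ((√s)⁻¹ • v k) = 1 := by
    simp only [sqnorm_smul, hc, ← mul_sum, ← hs, inv_mul_cancel₀ hv.ne']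
  have hbdd : BddAbove {r : ℝ | ∃ w : Fin K → Fin N → ℝ, (∑ k, sqnorm (w k)) = 1 ∧
      r = sqnorm (∑ k, A k *ᵥ w k)} := by
    refine ⟨∑ i, ∑ k, sqnorm (A k i), ?_⟩
    rintro _ ⟨w, hw, rfl⟩
    simpa only [hw, mul_one] using sqnorm_sum_mulVec_le_frobenius A w
  have hle : sqnorm (∑ k, A k *ᵥ ((√s)⁻¹ • v k)) ≤ lamMaxBlock A :=
    le_csSup hbdd ⟨_, hunit, rfl⟩
  simp only [mulVec_smul, ← smul_sum, sqnorm_smul, hc] at hle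
  rwa [inv_mul_le_iff₀ hv, mul_comm] at hle

lemma sqnorm_sum_mulVec_subset_le_lamMaxBlock (s : Finset (Fin K)) (v : Fin K → Fin N → ℝ) :
    sqnorm (∑ k ∈ s, A k *ᵥ v k) ≤ lamMaxBlock A * ∑ k ∈ s, sqnorm (v k) := by
  simpa [apply_ite, sum_ite_mem] using
    sqnorm_sum_mulVec_le_lamMaxBlock A (fun k => if k ∈ s then v k else 0)

lemma sum_sqnorm_sum_Iio_mulVec_le (v : Fin K → Fin N → ℝ) :
    ∑ j, sqnorm (∑ k ∈ Iio j, A k *ᵥ v k) ≤ K * lamMaxBlock A * ∑ k, sqnorm (v k) := by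
  have hj (j : Fin K) : sqnorm (∑ k ∈ Iio j, A k *ᵥ v k) ≤ lamMaxBlock A * ∑ k, sqnorm (v k) :=
    (sqnorm_sum_mulVec_subset_le_lamMaxBlock A _ v).trans <|
      mul_le_mul_of_nonneg_left
        (sum_le_univ_sum_of_nonneg fun k => sqnorm_nonneg (v k)) (lamMaxBlock_nonneg A)
  simpa [mul_assoc] using sum_le_sum fun j (_ : j ∈ univ) => hj j

lemma sum_sqnorm_transpose_mulVec_le_lamMaxBlock (u : Fin M → ℝ) :
    ∑ k, sqnorm ((A k)ᵀ *ᵥ u) ≤ lamMaxBlock A * sqnorm u := by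
  set s := ∑ k, sqnorm ((A k)ᵀ *ᵥ u) with hs
  have hdot : u ⬝ᵥ ∑ k, A k *ᵥ ((A k)ᵀ *ᵥ u) = s := by
    simp only [dotProduct_sum, dotProduct_mulVec, ← mulVec_transpose, hs, sqnorm_eq_dotProduct]
  have hsq : s * s ≤ lamMaxBlock A * sqnorm u * s := by
    calc s * s = (u ⬝ᵥ ∑ k, A k *ᵥ ((A k)ᵀ *ᵥ u)) ^ 2 := by rw [hdot, sq]
      _ ≤ sqnorm u * sqnorm (∑ k, A k *ᵥ ((A k)ᵀ *ᵥ u)) := dotProduct_sq_le_sqnorm_mul_sqnorm _ _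
      _ ≤ sqnorm u * (lamMaxBlock A * s) :=
        mul_le_mul_of_nonneg_left (sqnorm_sum_mulVec_le_lamMaxBlock A _) (sqnorm_nonneg u)
      _ = lamMaxBlock A * sqnorm u * s := by ring
  rcases (sum_sqnorm_nonneg fun k => (A k)ᵀ *ᵥ u).eq_or_lt with h0 | hpos
  · exact h0.symm.trans_le (mul_nonneg (lamMaxBlock_nonneg A) (sqnorm_nonneg u))
  · exact le_of_mul_le_mul_right hsq hpos

lemma card_mul_le_lamMaxBlock (hM : 1 ≤ M) {c : ℝ} (hc : ∀ k, c ≤ lamMinQ (A k)ᵀ) :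
    K * c ≤ lamMaxBlock A := by
  let u : Fin M → ℝ := Pi.single ⟨0, hM⟩ 1
  have hu : sqnorm u = 1 := by simp [sqnorm_eq_dotProduct, u]
  calc K * c = ∑ _k : Fin K, c := by simp
    _ ≤ ∑ k, sqnorm ((A k)ᵀ *ᵥ u) :=
      sum_le_sum fun k _ => (hc k).trans (lamMinQ_le_sqnorm_mulVec _ hu)
    _ ≤ lamMaxBlock A := by
      simpa only [hu, mul_one] using sum_sqnorm_transpose_mulVec_le_lamMaxBlock A u

lemma sqrt_card_mul_lamMaxBlock_le_div (hM : 1 ≤ M) {γ : ℝ} (hγ : 0 < γ)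
    (hrank : ∀ k, γ ^ 2 ≤ lamMinQ (A k)ᵀ) :
    √(K * lamMaxBlock A) ≤ lamMaxBlock A / γ := by
  refine Real.sqrt_le_iff.mpr ⟨div_nonneg (lamMaxBlock_nonneg A) hγ.le, ?_⟩
  rw [div_pow, le_div_iff₀ (by positivity)]
  calc K * lamMaxBlock A * γ ^ 2 = K * γ ^ 2 * lamMaxBlock A := by ring
    _ ≤ lamMaxBlock A * lamMaxBlock A :=
      mul_le_mul_of_nonneg_right (card_mul_le_lamMaxBlock A hM hrank) (lamMaxBlock_nonneg A)
    _ = lamMaxBlock A ^ 2 := (sq _).symm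

end ExtremalEigenvalues

lemma sum_Ioi_dotProduct_comm {ι m R : Type*} [Fintype ι] [Preorder ι] [LocallyFiniteOrderTop ι]
    [LocallyFiniteOrderBot ι] [Fintype m] [NonUnitalNonAssocSemiring R] (d e : ι → m → R) :
    ∑ k, (∑ j ∈ Ioi k, d j) ⬝ᵥ e k = ∑ j, d j ⬝ᵥ ∑ k ∈ Iio j, e k := by
  simp only [sum_dotProduct, dotProduct_sum]
  exact sum_comm' (by simp)

lemma nonneg_of_forall_pos_le_one_add_mul {a c : ℝ}
    (hac : ∀ t : ℝ, 0 < t → t ≤ 1 → 0 ≤ a + t * c) : 0 ≤ a := by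
  have hlim : Filter.Tendsto (fun t : ℝ => a + t * c) (nhdsWithin 0 (Set.Ioi 0)) (nhds a) := by
    have hcont : Continuous fun t : ℝ => a + t * c := by fun_prop
    simpa using (hcont.tendsto 0).mono_left nhdsWithin_le_nhds
  refine ge_of_tendsto hlim ?_
  filter_upwards [Ioc_mem_nhdsGT one_pos] with t ht using hac t ht.1 ht.2

/- The quadratic term of the increment along the segment from `z` to `y` is of second order, so
dividing by the step length leaves only the linearization of the quadratic and the chord of `φ`. -/
lemma dotProduct_mulVec_add_sub_nonneg_of_forall_le {M N : ℕ} {s : Set (Fin N → ℝ)}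
    {φ : (Fin N → ℝ) → ℝ} (hφ : ConvexOn ℝ s φ) (B : Matrix (Fin M) (Fin N) ℝ) (ρ : Fin M → ℝ)
    {z y : Fin N → ℝ} (hz : z ∈ s) (hy : y ∈ s)
    (hmin : ∀ w ∈ s, 1 / 2 * sqnorm ρ + φ z ≤ 1 / 2 * sqnorm (ρ + B *ᵥ (w - z)) + φ w) :
    0 ≤ ρ ⬝ᵥ B *ᵥ (y - z) + φ y - φ z := by
  refine nonneg_of_forall_pos_le_one_add_mul (c := sqnorm (B *ᵥ (y - z)) / 2) fun t ht ht1 => ?_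
  have hincr := hmin _ (hφ.1 hz hy (sub_nonneg.mpr ht1) ht.le (sub_add_cancel 1 t))
  have hchord := hφ.2 hz hy (sub_nonneg.mpr ht1) ht.le (sub_add_cancel 1 t)
  have hseg : (1 - t) • z + t • y - z = t • (y - z) := by module
  rw [hseg, mulVec_smul, sqnorm_add, dotProduct_smul, sqnorm_smul, smul_eq_mul] at hincr
  rw [smul_eq_mul, smul_eq_mul] at hchord
  refine (mul_nonneg_iff_of_pos_left ht).mp ?_
  linarith

section Objective

variable {K M N : ℕ} (A : Fin K → Matrix (Fin M) (Fin N) ℝ) (b : Fin M → ℝ)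
  (h : Fin K → (Fin N → ℝ) → ℝ)

lemma resid_eq_add_sum (x y : Fin K → Fin N → ℝ) :
    resid A b x = resid A b y + ∑ k, A k *ᵥ (x k - y k) := by
  simp only [resid, mulVec_sub, sum_sub_distrib]
  abel

lemma resid_update (w : Fin K → Fin N → ℝ) (k : Fin K) (y z : Fin N → ℝ) :
    resid A b (update w k y) = resid A b (update w k z) + A k *ᵥ (y - z) := by
  rw [resid_eq_add_sum A b _ (update w k z), Fintype.sum_eq_single k, update_self, update_self]
  intro j hj
  rw [update_of_ne hj, update_of_ne hj, sub_self, mulVec_zero]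

lemma fq_update_le_fq_update_iff (w : Fin K → Fin N → ℝ) (k : Fin K) (y z : Fin N → ℝ) :
    fq A b h (update w k z) ≤ fq A b h (update w k y) ↔
      gq A b (update w k z) + h k z ≤ gq A b (update w k y) + h k y := by
  simp only [fq, apply_update h, sum_update_of_mem (mem_univ k), ← add_assoc, add_le_add_iff_right]

lemma fq_sub_fq_le (x y : Fin K → Fin N → ℝ) :
    fq A b h x - fq A b h y ≤
      ∑ k, (resid A b x ⬝ᵥ A k *ᵥ (x k - y k) + (h k (x k) - h k (y k))) := by
  have hgq : gq A b x = gq A b y + resid A b x ⬝ᵥ (∑ k, A k *ᵥ (x k - y k))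
      - 1 / 2 * sqnorm (∑ k, A k *ᵥ (x k - y k)) := by
    simp only [gq, resid_eq_add_sum A b x y, sqnorm_add, add_dotProduct, ← sqnorm_eq_dotProduct]
    ring
  have hnonneg := sqnorm_nonneg (∑ k, A k *ᵥ (x k - y k))
  rw [sum_add_distrib, sum_sub_distrib, ← dotProduct_sum, fq, fq, hgq]
  linarith

end Objective

section Cycle

variable {K M N : ℕ}

/-- The iterate after the first `m` block updates of a cycle from `x` to `xp`. It interpolates
between `x` at `m = 0` and `xp` at `m = K`, and extends `wpt`, which is the case `m < K`. -/
def cyclePt (x xp : Fin K → Fin N → ℝ) (m : Fin (K + 1)) : Fin K → Fin N → ℝ :=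
  fun j => if j.castSucc < m then xp j else x j

variable (x xp : Fin K → Fin N → ℝ)

lemma cyclePt_zero : cyclePt x xp 0 = x := by
  funext j
  simp [cyclePt]

lemma cyclePt_last : cyclePt x xp (Fin.last K) = xp := by
  funext j
  simp [cyclePt, Fin.castSucc_lt_last]

lemma update_wpt_old (k : Fin K) : update (wpt x xp k) k (x k) = cyclePt x xp k.castSucc := by
  funext j
  rcases eq_or_ne j k with rfl | hj
  · simp [cyclePt]
  · simp [cyclePt, wpt, hj]

lemma update_wpt_new (k : Fin K) : update (wpt x xp k) k (xp k) = cyclePt x xp k.succ := by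
  funext j
  rcases eq_or_ne j k with rfl | hj
  · simp [cyclePt]
  · simp [cyclePt, wpt, hj, hj.le_iff_lt]

lemma resid_eq_resid_cyclePt_succ_add (A : Fin K → Matrix (Fin M) (Fin N) ℝ) (b : Fin M → ℝ)
    (k : Fin K) :
    resid A b xp =
      resid A b (cyclePt x xp k.succ) + ∑ j ∈ Ioi k, A j *ᵥ (xp j - x j) := by
  rw [resid_eq_add_sum A b xp (cyclePt x xp k.succ), ← filter_lt_eq_Ioi, sum_filter]
  congr 1
  refine sum_congr rfl fun j _ => ?_
  by_cases hj : j ≤ k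
  · simp [cyclePt, hj, hj.not_gt]
  · simp [cyclePt, hj, not_le.mp hj]

variable {x xp} {A : Fin K → Matrix (Fin M) (Fin N) ℝ} {b : Fin M → ℝ}
  {h : Fin K → (Fin N → ℝ) → ℝ} {X : Fin K → Set (Fin N → ℝ)}

lemma BCDStep.fq_le (hs : BCDStep A b h X x xp) (hx : ∀ k, x k ∈ X k) :
    fq A b h xp ≤ fq A b h x := by
  have hanti : Antitone fun m => fq A b h (cyclePt x xp m) :=
    Fin.antitone_iff_succ_le.mpr fun k => by
      simpa only [update_wpt_old, update_wpt_new] using (hs k).2 (x k) (hx k)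
  simpa only [cyclePt_zero, cyclePt_last] using hanti (Fin.zero_le (Fin.last K))

lemma BCDStep.dotProduct_mulVec_add_sub_nonneg (hs : BCDStep A b h X x xp) {k : Fin K}
    (hh : ConvexOn ℝ (X k) (h k)) {y : Fin N → ℝ} (hy : y ∈ X k) :
    0 ≤ resid A b (cyclePt x xp k.succ) ⬝ᵥ A k *ᵥ (y - xp k) + h k y - h k (xp k) := by
  refine dotProduct_mulVec_add_sub_nonneg_of_forall_le hh (A k) _ (hs k).1 hy fun w hw => ?_
  have hle := (fq_update_le_fq_update_iff A b h _ k _ _).mp ((hs k).2 w hw)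
  rwa [gq, gq, resid_update A b _ k w (xp k), update_wpt_new] at hle

lemma BCDStep.fq_sub_le_sum_dotProduct (hs : BCDStep A b h X x xp)
    (hh : ∀ k, ConvexOn ℝ (X k) (h k)) {y : Fin K → Fin N → ℝ} (hy : ∀ k, y k ∈ X k) :
    fq A b h xp - fq A b h y ≤
      ∑ j, A j *ᵥ (xp j - x j) ⬝ᵥ ∑ k ∈ Iio j, A k *ᵥ (xp k - y k) := by
  rw [← sum_Ioi_dotProduct_comm]
  refine (fq_sub_fq_le A b h xp y).trans (sum_le_sum fun k _ => ?_)
  have hopt := hs.dotProduct_mulVec_add_sub_nonneg (hh k) (hy k)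
  rw [← neg_sub (xp k), mulVec_neg, dotProduct_neg] at hopt
  rw [resid_eq_resid_cyclePt_succ_add x xp A b k, add_dotProduct]
  linarith

lemma BCDStep.fq_sub_le (hs : BCDStep A b h X x xp) (hh : ∀ k, ConvexOn ℝ (X k) (h k))
    {y : Fin K → Fin N → ℝ} (hy : ∀ k, y k ∈ X k) :
    fq A b h xp - fq A b h y ≤ √(∑ k, sqnorm (xp k - y k)) * √(K * lamMaxBlock A) *
      √(∑ k, sqnorm (A k *ᵥ (xp k - x k))) := by
  have hZ := sum_sqnorm_nonneg fun k => xp k - y k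
  have hD := sum_sqnorm_nonneg fun k => A k *ᵥ (xp k - x k)
  rw [mul_assoc, ← Real.sqrt_mul' _ hD, ← Real.sqrt_mul hZ]
  refine (hs.fq_sub_le_sum_dotProduct hh hy).trans (Real.le_sqrt_of_sq_le ?_)
  refine (sum_dotProduct_sq_le _ _).trans ?_
  refine (mul_le_mul_of_nonneg_left (sum_sqnorm_sum_Iio_mulVec_le A _) hD).trans_eq ?_
  ring

end Cycle

section Iterates

variable {K M N : ℕ} {A : Fin K → Matrix (Fin M) (Fin N) ℝ} {b : Fin M → ℝ}
  {h : Fin K → (Fin N → ℝ) → ℝ} {X : Fin K → Set (Fin N → ℝ)} {x : ℕ → Fin K → Fin N → ℝ}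

lemma bcd_iterate_mem (hx0 : ∀ k, x 0 k ∈ X k) (hstep : ∀ r, BCDStep A b h X (x r) (x (r + 1))) :
    ∀ r k, x r k ∈ X k
  | 0 => hx0
  | r + 1 => fun k => (hstep r k).1

lemma bcd_antitone_fq (hx0 : ∀ k, x 0 k ∈ X k)
    (hstep : ∀ r, BCDStep A b h X (x r) (x (r + 1))) : Antitone fun r => fq A b h (x r) :=
  antitone_nat_of_succ_le fun r => (hstep r).fq_le (bcd_iterate_mem hx0 hstep r)

end Iterates

lemma minOf_pos {K : ℕ} (hK : 1 ≤ K) {γ : Fin K → ℝ} (hγ : ∀ k, 0 < γ k) : 0 < minOf hK γ := by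
  simpa [minOf, lt_inf'_iff] using hγ

lemma minOf_le {K : ℕ} (hK : 1 ≤ K) (γ : Fin K → ℝ) (k : Fin K) : minOf hK γ ≤ γ k :=
  inf'_le _ (mem_univ k)

lemma le_maxOf {K : ℕ} (hK : 1 ≤ K) (P : Fin K → ℝ) (k : Fin K) : P k ≤ maxOf hK P :=
  le_sup' P (mem_univ k)

lemma one_le_log_two_mul_mul {m n : ℕ} (hmn : 3 ≤ m * n) :
    1 ≤ Real.log (2 * (m : ℝ) * (n : ℝ)) := by
  have hmn' : (3 : ℝ) ≤ m * n := mod_cast hmn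
  rw [Real.le_log_iff_exp_le (by linarith)]
  linarith [Real.exp_one_lt_three]

lemma mul_lamMaxBlock_le_mul_log_mul_add {K M N : ℕ} (hK : 1 ≤ K) (hNK : 3 ≤ N * K)
    (A : Fin K → Matrix (Fin M) (Fin N) ℝ) {a : ℝ} (ha : 0 ≤ a) :
    a * lamMaxBlock A ≤ a * Real.log (2 * (N : ℝ) * (K : ℝ)) *
      (lamMaxBlock A + maxOf hK (fun k => lamMaxQ (A k))) := by
  have hlog : a ≤ a * Real.log (2 * (N : ℝ) * (K : ℝ)) :=
    le_mul_of_one_le_right ha (one_le_log_two_mul_mul hNK)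
  have hmax : 0 ≤ maxOf hK fun k => lamMaxQ (A k) :=
    (lamMaxQ_nonneg (A ⟨0, hK⟩)).trans (le_maxOf hK (fun k => lamMaxQ (A k)) _)
  exact mul_le_mul hlog (le_add_of_nonneg_right hmax) (lamMaxBlock_nonneg A) (ha.trans hlog)

theorem bcd_cost_to_go_row_rank_general {K M N : ℕ} (hK : 1 ≤ K) (hM : 1 ≤ M)
    (A : Fin K → Matrix (Fin M) (Fin N) ℝ) (b : Fin M → ℝ)
    (γ : Fin K → ℝ) (hγ : ∀ k, 0 < γ k) (hrank : ∀ k, γ k ^ 2 ≤ lamMinQ (A k)ᵀ)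
    (X : Fin K → Set (Fin N → ℝ)) (h : Fin K → (Fin N → ℝ) → ℝ)
    (hh : ∀ k, ConvexOn ℝ (X k) (h k))
    (x : ℕ → Fin K → Fin N → ℝ) (hx0 : ∀ k, x 0 k ∈ X k)
    (hstep : ∀ r, BCDStep A b h X (x r) (x (r + 1)))
    (y : Fin K → Fin N → ℝ) (hy : ∀ k, y k ∈ X k) (R : ℝ)
    (hR : ∀ z : Fin K → Fin N → ℝ, (∀ k, z k ∈ X k) → fq A b h z ≤ fq A b h (x 0) →
      √(∑ k, sqnorm (z k - y k)) ≤ R)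
    (r : ℕ) :
    fq A b h (x (r + 1)) - fq A b h y ≤ R * (1 / minOf hK γ) * lamMaxBlock A *
      √(∑ k, sqnorm (A k *ᵥ (x (r + 1) k - x r k))) := by
  have hmin := minOf_pos hK hγ
  have hrank_min (k : Fin K) : minOf hK γ ^ 2 ≤ lamMinQ (A k)ᵀ :=
    (pow_le_pow_left₀ hmin.le (minOf_le hK γ k) 2).trans (hrank k)
  have hdist : √(∑ k, sqnorm (x (r + 1) k - y k)) ≤ R :=
    hR _ (bcd_iterate_mem hx0 hstep _) (bcd_antitone_fq hx0 hstep (Nat.zero_le _))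
  have hR0 : 0 ≤ R := (Real.sqrt_nonneg _).trans hdist
  calc fq A b h (x (r + 1)) - fq A b h y
      ≤ √(∑ k, sqnorm (x (r + 1) k - y k)) * √(K * lamMaxBlock A) *
          √(∑ k, sqnorm (A k *ᵥ (x (r + 1) k - x r k))) := (hstep r).fq_sub_le hh hy
    _ ≤ R * (lamMaxBlock A / minOf hK γ) *
          √(∑ k, sqnorm (A k *ᵥ (x (r + 1) k - x r k))) := by
      gcongr
      exact sqrt_card_mul_lamMaxBlock_le_div A hM hmin hrank_min
    _ = _ := by ring

end

/-- Lemma 4, case 2: cost-to-go estimate of cyclic exact BCD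
when each `A_k` has full row rank with `λ_min(A_k A_kᵀ) ≥ γ_k²`. -/
theorem bcd_cost_to_go_row_rank {K M N : ℕ} (hK : 1 ≤ K) (hM : 1 ≤ M) (hN : 1 ≤ N)
    (hNK : 3 ≤ N * K)
    (A : Fin K → Matrix (Fin M) (Fin N) ℝ) (b : Fin M → ℝ)
    (γ : Fin K → ℝ) (hγ : ∀ k, 0 < γ k)
    (hrank : ∀ k, γ k ^ 2 ≤ lamMinQ ((A k).transpose))
    (X : Fin K → Set (Fin N → ℝ)) (h : Fin K → (Fin N → ℝ) → ℝ)
    (hXne : ∀ k, (X k).Nonempty) (hXcl : ∀ k, IsClosed (X k))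
    (hXcv : ∀ k, Convex ℝ (X k))
    (hhcv : ∀ k, ConvexOn ℝ Set.univ (h k))
    (hhlsc : ∀ k, LowerSemicontinuous (h k))
    (x : ℕ → Fin K → Fin N → ℝ) (hx0 : ∀ k, x 0 k ∈ X k)
    (hstep : ∀ r : ℕ, BCDStep A b h X (x r) (x (r + 1)))
    (xstar : Fin K → Fin N → ℝ) (hxstarX : ∀ k, xstar k ∈ X k)
    (hxstar : ∀ y : Fin K → Fin N → ℝ, (∀ k, y k ∈ X k) → fq A b h xstar ≤ fq A b h y)
    (R0 : ℝ)
    (hR0 : ∀ z : Fin K → Fin N → ℝ, (∀ k, z k ∈ X k) → fq A b h z ≤ fq A b h (x 0) →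
      ∀ y : Fin K → Fin N → ℝ, (∀ k, y k ∈ X k) →
        (∀ z' : Fin K → Fin N → ℝ, (∀ k, z' k ∈ X k) → fq A b h y ≤ fq A b h z') →
        Real.sqrt (∑ k, sqnorm (z k - y k)) ≤ R0)
    (r : ℕ) :
    fq A b h (x (r + 1)) - fq A b h xstar ≤
      R0 * (1 / minOf hK γ) * Real.log (2 * (N : ℝ) * (K : ℝ)) *
        (lamMaxBlock A + maxOf hK (fun k => lamMaxQ (A k))) *
        Real.sqrt (∑ k, sqnorm ((A k).mulVec (x (r + 1) k - x r k))) := by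
  have hR := fun z hz hzx => hR0 z hz hzx xstar hxstarX hxstar
  have hcost := bcd_cost_to_go_row_rank_general hK hM A b γ hγ hrank X h
    (fun k => (hhcv k).subset (Set.subset_univ _) (hXcv k)) x hx0 hstep xstar hxstarX R0 hR r
  have hR0_nonneg : 0 ≤ R0 := (Real.sqrt_nonneg _).trans (hR (x 0) hx0 le_rfl)
  have hconst : 0 ≤ R0 * (1 / minOf hK γ) :=
    mul_nonneg hR0_nonneg (one_div_pos.mpr (minOf_pos hK hγ)).le
  exact hcost.trans <| mul_le_mul_of_nonneg_right
    (mul_lamMaxBlock_le_mul_log_mul_add hK hNK A hconst) (Real.sqrt_nonneg _)
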